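/- Let (A(n))_{n∈ℕ} be a stationary and ergodic sequence of random d×d matrices with entries in ℝ_max such that the positive part of max_{ij} A_{ij}(0) is integrable. Then for every strongly connected component c of 𝒢(A), γ(A^{{c}}) = γ(A^{[c]}) = γ^{[c]}, where A^{[c]} and A^{{c}} denote the sequences of submatrices indexed by F_c and H_c respectively. -/

import Mathlib

open Filter MeasureTheory ProbabilityTheory Topology

noncomputable section

/-- Max-plus action of a `d × d` matrix over `ℝ_max = ℝ ∪ {-∞}` (encoded as `EReal`,
with `⊤` never used) on a vector: `(A ⊗ v) i = max_j (A i j + v j)`. -/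
def mpVec {d : ℕ} (A : Fin d → Fin d → EReal) (v : Fin d → EReal) : Fin d → EReal :=
  fun i => ⨆ j, A i j + v j

/-- `appProd n f v = f 0 ⊗ f 1 ⊗ ⋯ ⊗ f (n-1) ⊗ v` in the max-plus algebra. -/
def appProd {d : ℕ} : ℕ → (ℕ → Fin d → Fin d → EReal) → (Fin d → EReal) → Fin d → EReal
  | 0, _, v => v
  | n + 1, f, v => mpVec (f 0) (appProd n (fun k => f (k + 1)) v)

/-- `xvec f n = f (n-1) ⊗ ⋯ ⊗ f 0 ⊗ 0`; with `f m = A(m)` this is `x(n, 0)`. -/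
def xvec {d : ℕ} (f : ℕ → Fin d → Fin d → EReal) : ℕ → Fin d → EReal
  | 0 => fun _ => 0
  | n + 1 => mpVec (f n) (xvec f n)

/-- `lvec n f = f 0 ⊗ f 1 ⊗ ⋯ ⊗ f (n-1) ⊗ 0`; with `f k = A(-(k+1))` this is `y(n, 0)`. -/
def lvec {d : ℕ} (n : ℕ) (f : ℕ → Fin d → Fin d → EReal) : Fin d → EReal :=
  appProd n f (fun _ => 0)

/-- Multiplication of an extended real by `1/n`. -/
def mpScale (n : ℕ) (x : EReal) : EReal := (((n : ℝ)⁻¹ : ℝ) : EReal) * x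

open Classical in
/-- Restriction of a matrix to the indices in `c`: entries outside `c × c` are `-∞`. -/
def mpRestrict {d : ℕ} (c : Set (Fin d)) (M : Fin d → Fin d → EReal) : Fin d → Fin d → EReal :=
  fun i j => if i ∈ c ∧ j ∈ c then M i j else ⊥

/-- Arc relation of the graph `𝒢(A)` of a random matrix `A`:
`(i,j)` is an arc iff `A ω i j ≠ -∞` with positive probability. -/
def arcRel {Ω : Type*} [MeasurableSpace Ω] (μ : Measure Ω) {d : ℕ}
    (A : Ω → Fin d → Fin d → EReal) (i j : Fin d) : Prop :=
  μ {ω | A ω i j ≠ ⊥} ≠ 0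

/-- `c` is a strongly connected component of the graph with arc relation `r`
(the mutual-reachability class of some node; nodes on no circuit are alone in their class). -/
def IsSCC {d : ℕ} (r : Fin d → Fin d → Prop) (c : Set (Fin d)) : Prop :=
  ∃ i, c = {j | Relation.ReflTransGen r i j ∧ Relation.ReflTransGen r j i}

/-- `i → c` : the node `i` reaches the component `c`. -/
def nodeReach {d : ℕ} (r : Fin d → Fin d → Prop) (i : Fin d) (c : Set (Fin d)) : Prop :=
  ∃ j ∈ c, Relation.ReflTransGen r i j

/-- `c → c'` : the component `c` reaches the component `c'`. -/
def sccReach {d : ℕ} (r : Fin d → Fin d → Prop) (c c' : Set (Fin d)) : Prop :=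
  ∃ i ∈ c, nodeReach r i c'

/-- `γ^{[c]} = max { γ^{(c')} : c → c' }`, where `γ` assigns to each s.c.c. its
maximal Lyapunov exponent. -/
def gammaBrack {d : ℕ} (r : Fin d → Fin d → Prop) (γ : Set (Fin d) → EReal)
    (c : Set (Fin d)) : EReal :=
  ⨆ c', ⨆ (_ : IsSCC r c' ∧ sccReach r c c'), γ c'

/-- The set of nodes `H_c = {c}` : nodes `i` with `c → i → c̃` for some s.c.c. `c̃`
realizing `γ^{(c̃)} = γ^{[c]}`. -/
def Hset {d : ℕ} (r : Fin d → Fin d → Prop) (γ : Set (Fin d) → EReal)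
    (c : Set (Fin d)) : Set (Fin d) :=
  {i | ∃ ct, IsSCC r ct ∧ (∃ j ∈ c, Relation.ReflTransGen r j i) ∧ nodeReach r i ct ∧
    γ ct = gammaBrack r γ c}

/-- `max { γ^{(c)} : c s.c.c. with i → c }`. -/
def limFormula {d : ℕ} (r : Fin d → Fin d → Prop) (γ : Set (Fin d) → EReal) (i : Fin d) : EReal :=
  ⨆ c, ⨆ (_ : IsSCC r c ∧ nodeReach r i c), γ c

/-- `F_c` : the union of the s.c.c.'s reachable from `c`. -/
def Fset {d : ℕ} (r : Fin d → Fin d → Prop) (c : Set (Fin d)) : Set (Fin d) :=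
  {j | ∃ ct, IsSCC r ct ∧ sccReach r c ct ∧ j ∈ ct}

/-!
Restricting the matrices to a component that attains the maximum bounds the growth rate from below.
For the upper bound, the maximal ergodic theorem gives a weak-type form of Kingman's inequality: the
probability that the growth rate exceeds `b` is at most `1 / (k * b)` times the integral of the
positive part of the product of length `k`, for any single `k`. Conjugating the matrices by the
diagonal potential `lam * reachCard` does not change the growth rate, but makes every path pay `lam`
when it leaves a strongly connected component. After subtracting a rate above all the exponents of
the components, the paths that stay in one component contribute `o(k)` to the integral, and the
contribution of all the others tends to `0` as `lam → ∞` with `k` fixed.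
-/

open scoped ENNReal

section Ergodic

variable {Ω : Type*} {θ : Ω → Ω} {f : Ω → ℝ≥0∞}

/-- The largest amount by which a Birkhoff sum of `f` of length at most `n` exceeds the rate `a` per
step, computed by Lindley's recursion; the truncated subtraction of `ℝ≥0∞` is the positive part. -/
def birkhoffExcess (θ : Ω → Ω) (f : Ω → ℝ≥0∞) (a : ℝ≥0∞) : ℕ → Ω → ℝ≥0∞
  | 0, _ => 0
  | n + 1, ω => f ω + birkhoffExcess θ f a n (θ ω) - a

theorem birkhoffSum_le_add_birkhoffExcess (a : ℝ≥0∞) (n : ℕ) (ω : Ω) :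
    birkhoffSum θ f n ω ≤ n * a + birkhoffExcess θ f a n ω := by
  induction n generalizing ω with
  | zero => simp
  | succ n ih =>
    calc birkhoffSum θ f (n + 1) ω
        ≤ f ω + (n * a + birkhoffExcess θ f a n (θ ω)) := by
          rw [birkhoffSum_succ']; gcongr; exact ih (θ ω)
      _ = n * a + (f ω + birkhoffExcess θ f a n (θ ω)) := add_left_comm _ _ _
      _ ≤ n * a + (a + birkhoffExcess θ f a (n + 1) ω) := add_le_add_right le_add_tsub _
      _ = (n + 1 : ℕ) * a + birkhoffExcess θ f a (n + 1) ω := by push_cast; ring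

theorem birkhoffExcess_le_succ (a : ℝ≥0∞) (n : ℕ) (ω : Ω) :
    birkhoffExcess θ f a n ω ≤ birkhoffExcess θ f a (n + 1) ω := by
  induction n generalizing ω with
  | zero => exact zero_le
  | succ n ih => exact tsub_le_tsub_right (add_le_add_right (ih (θ ω)) _) a

theorem birkhoffSum_le_add_birkhoffSum_tsub (C : ℝ≥0∞) (n : ℕ) (ω : Ω) :
    birkhoffSum θ f n ω ≤ n * C + birkhoffSum θ (fun ω => f ω - C) n ω := by
  simp only [birkhoffSum]
  calc ∑ k ∈ Finset.range n, f (θ^[k] ω)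
      ≤ ∑ k ∈ Finset.range n, (C + (f (θ^[k] ω) - C)) :=
        Finset.sum_le_sum fun k _ => le_add_tsub
    _ = n * C + ∑ k ∈ Finset.range n, (f (θ^[k] ω) - C) := by
        rw [Finset.sum_add_distrib, Finset.sum_const, Finset.card_range, nsmul_eq_mul]

theorem le_birkhoffSum_iterate_add {P : ℕ → Ω → ℝ≥0∞}
    (hsub : ∀ m n ω, P (m + n) ω ≤ P m ω + P n (θ^[m] ω)) (k r q : ℕ) (ω : Ω) :
    P (q * k + r) ω ≤ birkhoffSum θ^[k] (P k) q ω + P r ((θ^[k])^[q] ω) := by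
  induction q generalizing ω with
  | zero => simp
  | succ q ih =>
    calc P ((q + 1) * k + r) ω = P (k + (q * k + r)) ω := by ring_nf
      _ ≤ P k ω + P (q * k + r) (θ^[k] ω) := hsub _ _ _
      _ ≤ P k ω + (birkhoffSum θ^[k] (P k) q (θ^[k] ω) + P r ((θ^[k])^[q] (θ^[k] ω))) := by
          gcongr; exact ih _
      _ = birkhoffSum θ^[k] (P k) (q + 1) ω + P r ((θ^[k])^[q + 1] ω) := by
          rw [birkhoffSum_succ', Function.iterate_succ_apply, add_assoc]

variable [MeasurableSpace Ω] {μ : Measure Ω}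

theorem measurable_birkhoffExcess (hθ : Measurable θ) (hf : Measurable f) (a : ℝ≥0∞) (n : ℕ) :
    Measurable (birkhoffExcess θ f a n) := by
  induction n with
  | zero => exact measurable_const
  | succ n ih => exact (hf.add (ih.comp hθ)).sub_const a

theorem lintegral_birkhoffSum (hθ : MeasurePreserving θ μ μ) (hf : Measurable f) (n : ℕ) :
    ∫⁻ ω, birkhoffSum θ f n ω ∂μ = n * ∫⁻ ω, f ω ∂μ := by
  calc ∫⁻ ω, birkhoffSum θ f n ω ∂μ
      = ∑ k ∈ Finset.range n, ∫⁻ ω, f (θ^[k] ω) ∂μ :=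
        lintegral_finsetSum (f := fun k ω => f (θ^[k] ω)) _
          fun k _ => hf.comp (hθ.measurable.iterate k)
    _ = n * ∫⁻ ω, f ω ∂μ := by
        simp only [(hθ.iterate _).lintegral_comp hf, Finset.sum_const, Finset.card_range,
          nsmul_eq_mul]

theorem lintegral_birkhoffExcess_le (hθ : MeasurePreserving θ μ μ) (hf : Measurable f) (a : ℝ≥0∞)
    (n : ℕ) : ∫⁻ ω, birkhoffExcess θ f a n ω ∂μ ≤ n * ∫⁻ ω, f ω ∂μ := by
  induction n with
  | zero => simp [birkhoffExcess]
  | succ n ih =>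
    have hmeas := measurable_birkhoffExcess hθ.measurable hf a n
    calc ∫⁻ ω, birkhoffExcess θ f a (n + 1) ω ∂μ
        ≤ ∫⁻ ω, f ω + birkhoffExcess θ f a n (θ ω) ∂μ := lintegral_mono fun ω => tsub_le_self
      _ = ∫⁻ ω, f ω ∂μ + ∫⁻ ω, birkhoffExcess θ f a n ω ∂μ := by
          rw [lintegral_add_left hf, hθ.lintegral_comp hmeas]
      _ ≤ ∫⁻ ω, f ω ∂μ + n * ∫⁻ ω, f ω ∂μ := by gcongr
      _ = (n + 1 : ℕ) * ∫⁻ ω, f ω ∂μ := by push_cast; ring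

theorem mul_measure_birkhoffExcess_ne_zero_le (hθ : MeasurePreserving θ μ μ) (hf : Measurable f)
    (hfi : ∫⁻ ω, f ω ∂μ ≠ ∞) (a : ℝ≥0∞) (n : ℕ) :
    a * μ {ω | birkhoffExcess θ f a n ω ≠ 0} ≤ ∫⁻ ω, f ω ∂μ := by
  cases n with
  | zero => simp [birkhoffExcess]
  | succ n =>
    set E := birkhoffExcess θ f a
    have hE : ∀ m, Measurable (E m) := measurable_birkhoffExcess hθ.measurable hf a
    have hset : MeasurableSet {ω | E (n + 1) ω ≠ 0} :=
      (hE (n + 1)) (measurableSet_singleton 0).compl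
    have hfin : ∫⁻ ω, E (n + 1) ω ∂μ ≠ ∞ :=
      ne_top_of_le_ne_top (ENNReal.mul_ne_top (ENNReal.natCast_ne_top _) hfi)
        (lintegral_birkhoffExcess_le hθ hf a (n + 1))
    have hpoint : ∀ ω, E (n + 1) ω + {ω | E (n + 1) ω ≠ 0}.indicator (fun _ => a) ω
        ≤ f ω + E n (θ ω) := by
      intro ω
      by_cases h : E (n + 1) ω = 0
      · simp [h]
      · rw [Set.indicator_of_mem h]
        exact (tsub_add_cancel_of_le (tsub_pos_iff_lt.1 (pos_iff_ne_zero.2 h)).le).le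
    refine ENNReal.le_of_add_le_add_left hfin ?_
    calc ∫⁻ ω, E (n + 1) ω ∂μ + a * μ {ω | E (n + 1) ω ≠ 0}
        = ∫⁻ ω, E (n + 1) ω + {ω | E (n + 1) ω ≠ 0}.indicator (fun _ => a) ω ∂μ := by
          rw [lintegral_add_left (hE _), lintegral_indicator_const hset]
      _ ≤ ∫⁻ ω, f ω + E n (θ ω) ∂μ := lintegral_mono hpoint
      _ = ∫⁻ ω, E n ω ∂μ + ∫⁻ ω, f ω ∂μ := by
          rw [lintegral_add_left hf, hθ.lintegral_comp (hE n), add_comm]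
      _ ≤ ∫⁻ ω, E (n + 1) ω ∂μ + ∫⁻ ω, f ω ∂μ := by
          gcongr; exact birkhoffExcess_le_succ a n _

/-- The maximal ergodic theorem, as a weak-type inequality. -/
theorem mul_measure_exists_lt_birkhoffSum_le (hθ : MeasurePreserving θ μ μ) (hf : Measurable f)
    (a : ℝ≥0∞) : a * μ {ω | ∃ n : ℕ, n * a < birkhoffSum θ f n ω} ≤ ∫⁻ ω, f ω ∂μ := by
  rcases eq_or_ne (∫⁻ ω, f ω ∂μ) ∞ with hfi | hfi
  · exact hfi ▸ le_top
  have hsub : {ω | ∃ n : ℕ, n * a < birkhoffSum θ f n ω}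
      ⊆ ⋃ n, {ω | birkhoffExcess θ f a n ω ≠ 0} := by
    rintro ω ⟨n, hn⟩
    refine Set.mem_iUnion.2 ⟨n, fun h => hn.not_ge ?_⟩
    simpa only [h, add_zero] using birkhoffSum_le_add_birkhoffExcess (θ := θ) (f := f) a n ω
  have hmono : Monotone fun n => {ω | birkhoffExcess θ f a n ω ≠ 0} :=
    monotone_nat_of_le_succ fun n ω h =>
      ((pos_iff_ne_zero.2 h).trans_le (birkhoffExcess_le_succ a n ω)).ne'
  calc a * μ {ω | ∃ n : ℕ, n * a < birkhoffSum θ f n ω}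
      ≤ a * μ (⋃ n, {ω | birkhoffExcess θ f a n ω ≠ 0}) := by gcongr
    _ = ⨆ n, a * μ {ω | birkhoffExcess θ f a n ω ≠ 0} := by
        rw [hmono.measure_iUnion, ENNReal.mul_iSup]
    _ ≤ ∫⁻ ω, f ω ∂μ := iSup_le (mul_measure_birkhoffExcess_ne_zero_le hθ hf hfi a)

theorem tendsto_lintegral_tsub_natCast (hf : Measurable f) (hfi : ∫⁻ ω, f ω ∂μ ≠ ∞) :
    Tendsto (fun n : ℕ => ∫⁻ ω, f ω - n ∂μ) atTop (𝓝 0) := by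
  rw [← lintegral_zero (μ := μ)]
  refine tendsto_lintegral_of_dominated_convergence f (fun n => hf.sub_const _)
    (fun n => Eventually.of_forall fun ω => tsub_le_self) hfi ?_
  filter_upwards [ae_lt_top hf hfi] with ω hω
  obtain ⟨N, hN⟩ := ENNReal.exists_nat_gt hω.ne
  refine tendsto_const_nhds.congr' ?_
  filter_upwards [eventually_ge_atTop N] with n hn
  exact (tsub_eq_zero_of_le (hN.le.trans (by exact_mod_cast hn))).symm

theorem eventually_le_natCast_mul {C e : ℝ≥0∞} (hC : C ≠ ∞) (he : e ≠ 0) :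
    ∀ᶠ n : ℕ in atTop, C ≤ n * e := by
  obtain ⟨N, hN⟩ := ENNReal.exists_nat_mul_gt he hC
  filter_upwards [eventually_ge_atTop N] with n hn
  exact hN.le.trans (by gcongr)

theorem ae_eventually_iterate_le (hθ : MeasurePreserving θ μ μ) (hf : Measurable f)
    (hfi : ∫⁻ ω, f ω ∂μ ≠ ∞) {e : ℝ≥0∞} (he : e ≠ 0) :
    ∀ᵐ ω ∂μ, ∀ᶠ n : ℕ in atTop, f (θ^[n] ω) ≤ n * e := by
  have he2 : e / 2 ≠ 0 := ENNReal.div_ne_zero.2 ⟨he, by simp⟩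
  have he4 : e / 2 / 2 ≠ 0 := ENNReal.div_ne_zero.2 ⟨he2, by simp⟩
  have hgood : ∀ (C : ℕ) (ω : Ω),
      (∀ n : ℕ, birkhoffSum θ (fun ω => f ω - C) n ω ≤ n * (e / 2 / 2)) →
      ∀ᶠ n : ℕ in atTop, f (θ^[n] ω) ≤ n * e := by
    intro C ω hsum
    filter_upwards [eventually_le_natCast_mul (ENNReal.natCast_ne_top C) he2,
      eventually_ge_atTop 1] with n hn hn1
    calc f (θ^[n] ω) ≤ C + (f (θ^[n] ω) - C) := le_add_tsub
      _ ≤ C + birkhoffSum θ (fun ω => f ω - C) (n + 1) ω := by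
          rw [birkhoffSum_succ]; gcongr; exact le_add_self
      _ ≤ n * (e / 2) + (n + 1 : ℕ) * (e / 2 / 2) := add_le_add hn (hsum (n + 1))
      _ ≤ n * (e / 2) + (n * 2 : ℕ) * (e / 2 / 2) := by gcongr; omega
      _ = n * e := by
          rw [Nat.cast_mul, Nat.cast_two, mul_assoc, ENNReal.mul_div_cancel two_ne_zero
            ENNReal.ofNat_ne_top, ← mul_add, ENNReal.add_halves]
  have hbound : ∀ C : ℕ, e / 2 / 2 * μ {ω | ¬ ∀ᶠ n : ℕ in atTop, f (θ^[n] ω) ≤ n * e}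
      ≤ ∫⁻ ω, f ω - C ∂μ := by
    intro C
    refine le_trans ?_ (mul_measure_exists_lt_birkhoffSum_le hθ (hf.sub_const C) (e / 2 / 2))
    gcongr with ω
    intro hω
    by_contra! hsum
    exact hω (hgood C ω hsum)
  have hzero := ge_of_tendsto' (tendsto_lintegral_tsub_natCast hf hfi) hbound
  exact (mul_eq_zero.1 (nonpos_iff_eq_zero.1 hzero)).resolve_left he4

/-- The upper bound in Kingman's theorem, as a weak-type inequality. -/
theorem mul_measure_frequently_lt_le {P : ℕ → Ω → ℝ≥0∞} (hθ : MeasurePreserving θ μ μ)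
    (hP : ∀ n, Measurable (P n)) (hPi : ∀ n, ∫⁻ ω, P n ω ∂μ ≠ ∞)
    (hsub : ∀ m n ω, P (m + n) ω ≤ P m ω + P n (θ^[m] ω)) {a b : ℝ≥0∞} (hba : b < a) (k : ℕ) :
    k * b * μ {ω | ∃ᶠ n : ℕ in atTop, n * a < P n ω} ≤ ∫⁻ ω, P k ω ∂μ := by
  rcases eq_or_ne k 0 with rfl | hk
  · simp
  have hw : ∀ᵐ ω ∂μ, ∀ᶠ q : ℕ in atTop,
      ∑ r ∈ Finset.range k, P r ((θ^[k])^[q] ω) ≤ q * (k * (a - b)) := by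
    refine ae_eventually_iterate_le (f := fun ω => ∑ r ∈ Finset.range k, P r ω) (hθ.iterate k)
      (Finset.measurable_fun_sum _ fun r _ => hP r) ?_
      (mul_ne_zero (Nat.cast_ne_zero.2 hk) (tsub_pos_of_lt hba).ne')
    rw [lintegral_finsetSum _ fun r _ => hP r]
    exact (ENNReal.sum_lt_top.2 fun r _ => (hPi r).lt_top).ne
  have hgood : ∀ᵐ ω ∂μ, (∃ᶠ n : ℕ in atTop, n * a < P n ω) →
      ∃ q : ℕ, q * (k * b) < birkhoffSum θ^[k] (P k) q ω := by
    filter_upwards [hw] with ω hω hfreq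
    by_contra! hsum
    refine hfreq (((Nat.tendsto_div_const_atTop hk).eventually hω).mono fun n hn => not_lt.2 ?_)
    calc P n ω = P (n / k * k + n % k) ω := by rw [Nat.div_add_mod']
      _ ≤ birkhoffSum θ^[k] (P k) (n / k) ω + P (n % k) ((θ^[k])^[n / k] ω) :=
          le_birkhoffSum_iterate_add hsub _ _ _ _
      _ ≤ (n / k : ℕ) * (k * b) + (n / k : ℕ) * (k * (a - b)) := by
          refine add_le_add (hsum _) (le_trans ?_ hn)
          exact Finset.single_le_sum (f := fun r => P r ((θ^[k])^[n / k] ω))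
            (fun _ _ => zero_le) (Finset.mem_range.2 (Nat.mod_lt _ hk.pos))
      _ = (n / k * k : ℕ) * a := by
          rw [← mul_add, ← mul_add, add_tsub_cancel_of_le hba.le, Nat.cast_mul, mul_assoc]
      _ ≤ n * a := by gcongr; exact Nat.div_mul_le_self n k
  calc k * b * μ {ω | ∃ᶠ n : ℕ in atTop, n * a < P n ω}
      ≤ k * b * μ {ω | ∃ q : ℕ, q * (k * b) < birkhoffSum θ^[k] (P k) q ω} := by
        gcongr _ * ?_
        exact measure_mono_ae hgood
    _ ≤ ∫⁻ ω, P k ω ∂μ := mul_measure_exists_lt_birkhoffSum_le (hθ.iterate k) (hP k) _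

theorem tendsto_measure_ne_zero [IsFiniteMeasure μ] {G : ℕ → Ω → ℝ≥0∞}
    (hG : ∀ n, Measurable (G n)) (hG0 : ∀ᵐ ω ∂μ, ∀ᶠ n in atTop, G n ω = 0) :
    Tendsto (fun n => μ {ω | G n ω ≠ 0}) atTop (𝓝 0) := by
  have hlim : ∀ᵐ ω ∂μ, ∀ᶠ n in atTop, ω ∈ {ω | G n ω ≠ 0} ↔ ω ∈ (∅ : Set Ω) := by
    filter_upwards [hG0] with ω hω
    filter_upwards [hω] with n hn
    simp [hn]
  have hset : ∀ n, MeasurableSet {ω | G n ω ≠ 0} := fun n => hG n (measurableSet_singleton 0).compl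
  simpa only [measure_empty] using tendsto_measure_of_ae_tendsto_indicator_of_isFiniteMeasure atTop
    MeasurableSet.empty hset hlim

theorem eventually_lintegral_le_natCast_mul [IsFiniteMeasure μ] {G : ℕ → Ω → ℝ≥0∞}
    (hθ : MeasurePreserving θ μ μ) (hf : Measurable f) (hfi : ∫⁻ ω, f ω ∂μ ≠ ∞)
    (hG : ∀ n, Measurable (G n)) (hGf : ∀ n ω, G n ω ≤ birkhoffSum θ f n ω)
    (hG0 : ∀ᵐ ω ∂μ, ∀ᶠ n in atTop, G n ω = 0) {η : ℝ≥0∞} (hη : η ≠ 0) :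
    ∀ᶠ n : ℕ in atTop, ∫⁻ ω, G n ω ∂μ ≤ n * η := by
  have hη2 : 0 < η / 2 := ENNReal.half_pos hη
  obtain ⟨C, hC⟩ := ((tendsto_lintegral_tsub_natCast hf hfi).eventually_le_const hη2).exists
  have hsmall : Tendsto (fun n => C * μ {ω | G n ω ≠ 0}) atTop (𝓝 0) := by
    simpa only [mul_zero] using ENNReal.Tendsto.const_mul (tendsto_measure_ne_zero hG hG0)
      (Or.inr (ENNReal.natCast_ne_top C))
  have hpoint : ∀ n ω, G n ω ≤ {ω | G n ω ≠ 0}.indicator (fun _ => n * (C : ℝ≥0∞)) ω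
      + birkhoffSum θ (fun ω => f ω - C) n ω := by
    intro n ω
    by_cases h : G n ω = 0
    · exact h.le.trans zero_le
    · rw [Set.indicator_of_mem h]
      exact (hGf n ω).trans (birkhoffSum_le_add_birkhoffSum_tsub _ n ω)
  filter_upwards [hsmall.eventually_le_const hη2] with n hn
  calc ∫⁻ ω, G n ω ∂μ
      ≤ ∫⁻ ω, {ω | G n ω ≠ 0}.indicator (fun _ => n * (C : ℝ≥0∞)) ω
          + birkhoffSum θ (fun ω => f ω - C) n ω ∂μ := lintegral_mono (hpoint n)
    _ = n * (C * μ {ω | G n ω ≠ 0}) + n * ∫⁻ ω, f ω - C ∂μ := by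
        have hset : MeasurableSet {ω | G n ω ≠ 0} := hG n (measurableSet_singleton 0).compl
        rw [lintegral_add_left (measurable_const.indicator hset), lintegral_indicator_const hset,
          lintegral_birkhoffSum hθ (hf.sub_const _), mul_assoc]
    _ ≤ n * (η / 2) + n * (η / 2) := by gcongr
    _ = n * η := by rw [← mul_add, ENNReal.add_halves]

end Ergodic

section MaxPlus

variable {d : ℕ} {f g : ℕ → Fin d → Fin d → EReal} {r : Fin d → Fin d → Prop}

theorem ereal_coe_ennreal_natCast (n : ℕ) : ((n : ℝ≥0∞) : EReal) = (n : ℝ) := rfl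

/-- The positive part of the largest entry of a vector, as an element of `[0, ∞]`. -/
def posMax (v : Fin d → EReal) : ℝ≥0∞ := ⨆ i, (v i).toENNReal

theorem posMax_le_iff {v : Fin d → EReal} {b : ℝ≥0∞} :
    posMax v ≤ b ↔ ∀ i, v i ≤ (b : EReal) := by
  refine iSup_le_iff.trans (forall_congr' fun i => ?_)
  rw [← EReal.coe_ennreal_le_coe_ennreal_iff, EReal.coe_toENNReal_eq_max, max_le_iff]
  exact and_iff_right (EReal.coe_ennreal_nonneg b)

theorem le_posMax (v : Fin d → EReal) (i : Fin d) : v i ≤ (posMax v : EReal) :=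
  posMax_le_iff.1 le_rfl i

theorem xvec_mono (h : ∀ k i j, f k i j ≤ g k i j) (n : ℕ) (i : Fin d) :
    xvec f n i ≤ xvec g n i := by
  induction n generalizing i with
  | zero => exact le_rfl
  | succ n ih => exact iSup_mono fun j => add_le_add (h n i j) (ih j)

theorem xvec_le_add_of_le_add_potential {u : Fin d → ℝ} (hu : ∀ i, 0 ≤ u i) {L : ℝ}
    (h : ∀ k i j, f k i j ≤ g k i j + (u i - u j + L : ℝ)) (n : ℕ) (i : Fin d) :
    xvec f n i ≤ xvec g n i + (u i + n * L : ℝ) := by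
  induction n generalizing i with
  | zero => simpa [xvec] using EReal.coe_nonneg.2 (hu i)
  | succ n ih =>
    refine iSup_le fun j => ?_
    calc f n i j + xvec f n j
        ≤ g n i j + (u i - u j + L : ℝ) + (xvec g n j + (u j + n * L : ℝ)) :=
          add_le_add (h n i j) (ih j)
      _ = g n i j + xvec g n j + (u i + (n + 1 : ℕ) * L : ℝ) := by
          rw [add_add_add_comm, ← EReal.coe_add]
          congr 2
          push_cast
          ring
      _ ≤ xvec g (n + 1) i + (u i + (n + 1 : ℕ) * L : ℝ) := by
          gcongr
          exact le_iSup (fun j => g n i j + xvec g n j) j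

theorem xvec_le_add_of_le_add_const {L : ℝ} (h : ∀ k i j, f k i j ≤ g k i j + L) (n : ℕ)
    (i : Fin d) : xvec f n i ≤ xvec g n i + (n * L : ℝ) := by
  simpa using xvec_le_add_of_le_add_potential (u := 0) (L := L) (fun _ => le_rfl)
    (fun k i j => by simpa using h k i j) n i

theorem xvec_le_xvec_sub_const_add (f : ℕ → Fin d → Fin d → EReal) (L : ℝ) (n : ℕ) (i : Fin d) :
    xvec f n i ≤ xvec (fun k i j => f k i j - L) n i + (n * L : ℝ) :=
  xvec_le_add_of_le_add_const (fun _ _ _ => EReal.sub_add_cancel.ge) n i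

theorem xvec_add_le (f : ℕ → Fin d → Fin d → EReal) (m n : ℕ) (i : Fin d) :
    xvec f (m + n) i ≤ xvec (fun k => f (m + k)) n i + (posMax (xvec f m) : EReal) := by
  induction n generalizing i with
  | zero => simpa [xvec] using le_posMax (xvec f m) i
  | succ n ih =>
    refine iSup_le fun j => ?_
    calc f (m + n) i j + xvec f (m + n) j
        ≤ f (m + n) i j + (xvec (fun k => f (m + k)) n j + (posMax (xvec f m) : EReal)) := by
          gcongr; exact ih j
      _ = f (m + n) i j + xvec (fun k => f (m + k)) n j + (posMax (xvec f m) : EReal) :=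
          (add_assoc _ _ _).symm
      _ ≤ xvec (fun k => f (m + k)) (n + 1) i + (posMax (xvec f m) : EReal) := by
          gcongr
          exact le_iSup (fun j => f (m + n) i j + xvec (fun k => f (m + k)) n j) j

theorem posMax_xvec_add_le (f : ℕ → Fin d → Fin d → EReal) (m n : ℕ) :
    posMax (xvec f (m + n)) ≤ posMax (xvec f m) + posMax (xvec (fun k => f (m + k)) n) := by
  refine posMax_le_iff.2 fun i => (xvec_add_le f m n i).trans ?_
  rw [add_comm, EReal.coe_ennreal_add]
  gcongr
  exact le_posMax _ i

theorem posMax_xvec_iterate_add_le {Ω : Type*} (θ : Ω → Ω) (A : Ω → Fin d → Fin d → EReal)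
    (m n : ℕ) (ω : Ω) :
    posMax (xvec (fun k => A (θ^[k] ω)) (m + n)) ≤ posMax (xvec (fun k => A (θ^[k] ω)) m)
      + posMax (xvec (fun k => A (θ^[k] (θ^[m] ω))) n) := by
  simpa only [← Function.iterate_add_apply, Nat.add_comm m] using
    posMax_xvec_add_le (fun k => A (θ^[k] ω)) m n

theorem posMax_xvec_le_sum {b : ℕ → ℝ≥0∞} (h : ∀ k i j, f k i j ≤ (b k : EReal)) (n : ℕ) :
    posMax (xvec f n) ≤ ∑ k ∈ Finset.range n, b k := by
  induction n with
  | zero => exact posMax_le_iff.2 fun _ => by simp [xvec]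
  | succ n ih =>
    refine posMax_le_iff.2 fun i => iSup_le fun j => ?_
    rw [Finset.sum_range_succ_comm, EReal.coe_ennreal_add]
    exact add_le_add (h n i j) (posMax_le_iff.1 ih j)

theorem posMax_xvec_le_birkhoffSum {Ω : Type*} {θ : Ω → Ω} {A : Ω → Fin d → Fin d → EReal}
    {a : Ω → ℝ≥0∞} (hAa : ∀ ω i j, A ω i j ≤ (a ω : EReal)) (n : ℕ) (ω : Ω) :
    posMax (xvec (fun m => A (θ^[m] ω)) n) ≤ birkhoffSum θ a n ω :=
  posMax_xvec_le_sum (fun m => hAa (θ^[m] ω)) n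

theorem mpRestrict_mono {S T : Set (Fin d)} (hST : S ⊆ T) {M N : Fin d → Fin d → EReal}
    (hMN : ∀ i j, M i j ≤ N i j) (i j : Fin d) : mpRestrict S M i j ≤ mpRestrict T N i j := by
  by_cases hS : i ∈ S ∧ j ∈ S
  · exact (if_pos hS).trans_le ((hMN i j).trans_eq (if_pos ⟨hST hS.1, hST hS.2⟩).symm)
  · exact (if_neg hS).trans_le bot_le

theorem mpRestrict_le (T : Set (Fin d)) (M : Fin d → Fin d → EReal) (i j : Fin d) :
    mpRestrict T M i j ≤ M i j := by
  unfold mpRestrict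
  split_ifs
  exacts [le_rfl, bot_le]

theorem xvec_mpRestrict_of_notMem (f : ℕ → Fin d → Fin d → EReal) {T : Set (Fin d)} {i : Fin d}
    (hi : i ∉ T) {n : ℕ} (hn : n ≠ 0) : xvec (fun k => mpRestrict T (f k)) n i = ⊥ := by
  obtain ⟨m, rfl⟩ := Nat.exists_eq_succ_of_ne_zero hn
  simp [xvec, mpVec, mpRestrict, hi]

/-- The communicating class of the node `i`. -/
def commClass (r : Fin d → Fin d → Prop) (i : Fin d) : Set (Fin d) :=
  {j | Relation.ReflTransGen r i j ∧ Relation.ReflTransGen r j i}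

theorem self_mem_commClass (r : Fin d → Fin d → Prop) (i : Fin d) : i ∈ commClass r i :=
  ⟨.refl, .refl⟩

theorem commClass_eq {i j : Fin d} (h : j ∈ commClass r i) : commClass r j = commClass r i :=
  Set.ext fun _ => ⟨fun hk => ⟨h.1.trans hk.1, hk.2.trans h.2⟩,
    fun hk => ⟨h.2.trans hk.1, hk.2.trans h.1⟩⟩

/-- The number of nodes reachable from `i`; it decreases along the arcs, strictly so along those
that leave a communicating class. -/
def reachCard (r : Fin d → Fin d → Prop) (i : Fin d) : ℕ :=
  {k | Relation.ReflTransGen r i k}.ncard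

theorem reachCard_le (r : Fin d → Fin d → Prop) (i : Fin d) : reachCard r i ≤ d := by
  simpa [reachCard] using Set.ncard_le_card {k | Relation.ReflTransGen r i k}

theorem reachCard_le_of_arc {i j : Fin d} (h : r i j) : reachCard r j ≤ reachCard r i :=
  Set.ncard_le_ncard fun _ hk => Relation.ReflTransGen.head h hk

theorem reachCard_lt_of_arc {i j : Fin d} (h : r i j) (hj : j ∉ commClass r i) :
    reachCard r j < reachCard r i :=
  Set.ncard_lt_ncard ⟨fun _ hk => Relation.ReflTransGen.head h hk,
    fun hsub => hj ⟨.single h, hsub .refl⟩⟩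

open Classical in
/-- The block-diagonal part of a matrix: only the entries inside a communicating class of `r`
are kept. -/
def blockDiag (r : Fin d → Fin d → Prop) (M : Fin d → Fin d → EReal) : Fin d → Fin d → EReal :=
  fun i j => if j ∈ commClass r i then M i j else ⊥

open Classical in
/-- The diagonal conjugate of a matrix supported in `r` by the potential `lam * reachCard r`, which
lowers by at least `lam` the entries between different communicating classes. -/
def levelConj (r : Fin d → Fin d → Prop) (lam : ℕ) (M : Fin d → Fin d → EReal) :
    Fin d → Fin d → EReal :=
  fun i j => if r i j then M i j + (lam * (reachCard r j - reachCard r i) : ℝ) else ⊥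

theorem blockDiag_le (r : Fin d → Fin d → Prop) (M : Fin d → Fin d → EReal) (i j : Fin d) :
    blockDiag r M i j ≤ M i j := by
  unfold blockDiag
  split_ifs
  exacts [le_rfl, bot_le]

theorem xvec_blockDiag_le (f : ℕ → Fin d → Fin d → EReal) (n : ℕ) (i : Fin d) :
    xvec (fun k => blockDiag r (f k)) n i
      ≤ xvec (fun k => mpRestrict (commClass r i) (f k)) n i := by
  suffices h : ∀ c j, commClass r j = c →
      xvec (fun k => blockDiag r (f k)) n j ≤ xvec (fun k => mpRestrict c (f k)) n j from
    h _ i rfl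
  intro c
  induction n with
  | zero => exact fun j _ => le_rfl
  | succ n ih =>
    rintro j rfl
    refine iSup_mono fun k => ?_
    by_cases hk : k ∈ commClass r j
    · refine add_le_add ?_ (ih k (commClass_eq hk))
      exact (if_pos hk).trans_le (if_pos ⟨self_mem_commClass r j, hk⟩).ge
    · simp [blockDiag, hk]

theorem xvec_blockDiag_sub_const_le (f : ℕ → Fin d → Fin d → EReal) (L : ℝ) (n : ℕ) (i : Fin d) :
    xvec (fun k => blockDiag r (fun i j => f k i j - L)) n i
      ≤ xvec (fun k => blockDiag r (f k)) n i + (n * -L : ℝ) := by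
  refine xvec_le_add_of_le_add_const (fun k i j => ?_) n i
  unfold blockDiag
  split_ifs
  exacts [le_rfl, bot_le]

theorem levelConj_le (r : Fin d → Fin d → Prop) (lam : ℕ) (M : Fin d → Fin d → EReal)
    (i j : Fin d) : levelConj r lam M i j ≤ M i j := by
  unfold levelConj
  split_ifs with h
  · refine add_le_of_nonpos_right (EReal.coe_nonpos.2 ?_)
    exact mul_nonpos_of_nonneg_of_nonpos (Nat.cast_nonneg _)
      (sub_nonpos.2 (Nat.cast_le.2 (reachCard_le_of_arc h)))
  · exact bot_le

theorem levelConj_le_sub {i j : Fin d} (hj : j ∉ commClass r i) (lam : ℕ)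
    (M : Fin d → Fin d → EReal) : levelConj r lam M i j ≤ M i j - (lam : ℝ) := by
  unfold levelConj
  split_ifs with h
  · rw [sub_eq_add_neg (M i j), ← EReal.coe_neg]
    gcongr
    have hlt : (reachCard r j + 1 : ℝ) ≤ reachCard r i := by
      exact_mod_cast reachCard_lt_of_arc h hj
    nlinarith [(Nat.cast_nonneg lam : (0 : ℝ) ≤ lam)]
  · exact bot_le

/-- A path either stays in one communicating class or pays `lam` for leaving it. -/
theorem xvec_levelConj_le_max (r : Fin d → Fin d → Prop) (lam : ℕ)
    (f : ℕ → Fin d → Fin d → EReal) (n : ℕ) (i : Fin d) :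
    xvec (fun k => levelConj r lam (f k)) n i
      ≤ max (xvec (fun k => blockDiag r (f k)) n i) (xvec f n i - (lam : ℝ)) := by
  induction n generalizing i with
  | zero => exact le_max_left _ _
  | succ n ih =>
    refine iSup_le fun j => ?_
    have hle : f n i j + xvec f n j ≤ xvec f (n + 1) i :=
      le_iSup (fun j => f n i j + xvec f n j) j
    have hfree : xvec (fun k => levelConj r lam (f k)) n j ≤ xvec f n j :=
      xvec_mono (fun k => levelConj_le r lam (f k)) n j
    by_cases hj : j ∈ commClass r i
    · have hblock : levelConj r lam (f n) i j ≤ blockDiag r (f n) i j :=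
        (levelConj_le r lam (f n) i j).trans_eq (if_pos hj).symm
      rcases le_max_iff.1 (ih j) with hn | hn
      · exact le_max_of_le_left ((add_le_add hblock hn).trans (le_iSup
          (fun j => blockDiag r (f n) i j + xvec (fun k => blockDiag r (f k)) n j) j))
      · refine le_max_of_le_right ((add_le_add (levelConj_le r lam (f n) i j) hn).trans ?_)
        rw [← add_sub_assoc]
        exact EReal.sub_le_sub hle le_rfl
    · refine le_max_of_le_right ((add_le_add (levelConj_le_sub hj lam (f n)) hfree).trans ?_)
      rw [sub_eq_add_neg, add_right_comm, ← sub_eq_add_neg]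
      exact EReal.sub_le_sub hle le_rfl

theorem posMax_xvec_levelConj_le (r : Fin d → Fin d → Prop) (lam : ℕ)
    (f : ℕ → Fin d → Fin d → EReal) (n : ℕ) :
    posMax (xvec (fun k => levelConj r lam (f k)) n)
      ≤ posMax (xvec (fun k => blockDiag r (f k)) n) + (posMax (xvec f n) - lam) := by
  refine posMax_le_iff.2 fun i => (xvec_levelConj_le_max r lam f n i).trans (max_le ?_ ?_)
  · exact (le_posMax _ i).trans (EReal.coe_ennreal_le_coe_ennreal_iff.2 le_self_add)
  · refine le_trans ?_ (EReal.coe_ennreal_le_coe_ennreal_iff.2 le_add_self)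
    refine EReal.sub_le_of_le_add ((le_posMax _ i).trans ?_)
    have h : posMax (xvec f n) ≤ posMax (xvec f n) - lam + lam := le_tsub_add
    simpa only [EReal.coe_ennreal_add, ereal_coe_ennreal_natCast] using
      EReal.coe_ennreal_le_coe_ennreal_iff.2 h

theorem posMax_xvec_le_levelConj (lam : ℕ) (hf : ∀ k i j, f k i j ≠ ⊥ → r i j) (n : ℕ) :
    posMax (xvec f n) ≤ posMax (xvec (fun k => levelConj r lam (f k)) n) + (lam * d : ℕ) := by
  have hconj : ∀ k i j, f k i j ≤ levelConj r lam (f k) i j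
      + (lam * reachCard r i - lam * reachCard r j + 0 : ℝ) := by
    intro k i j
    by_cases h : r i j
    · rw [levelConj, if_pos h, add_assoc, ← EReal.coe_add]
      ring_nf
      simp
    · exact (not_imp_comm.1 (hf k i j) h).trans_le bot_le
  refine posMax_le_iff.2 fun i =>
    (xvec_le_add_of_le_add_potential (fun i => by positivity) hconj n i).trans ?_
  rw [EReal.coe_ennreal_add, ereal_coe_ennreal_natCast, mul_zero, add_zero]
  refine add_le_add (le_posMax _ i) (EReal.coe_le_coe_iff.2 ?_)
  have h : lam * reachCard r i ≤ lam * d := Nat.mul_le_mul_left _ (reachCard_le r i)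
  exact_mod_cast h

variable {Ω : Type*} [MeasurableSpace Ω]

theorem measurable_mpRestrict (T : Set (Fin d)) : Measurable (mpRestrict T) := by
  refine measurable_pi_lambda _ fun i => measurable_pi_lambda _ fun j => ?_
  unfold mpRestrict
  split_ifs <;> fun_prop

theorem measurable_blockDiag (r : Fin d → Fin d → Prop) : Measurable (blockDiag r) := by
  refine measurable_pi_lambda _ fun i => measurable_pi_lambda _ fun j => ?_
  unfold blockDiag
  split_ifs <;> fun_prop

theorem measurable_levelConj (r : Fin d → Fin d → Prop) (lam : ℕ) :
    Measurable (levelConj r lam) := by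
  refine measurable_pi_lambda _ fun i => measurable_pi_lambda _ fun j => ?_
  unfold levelConj
  split_ifs <;> fun_prop

theorem measurable_posMax_xvec {θ : Ω → Ω} (hθ : Measurable θ) {A : Ω → Fin d → Fin d → EReal}
    (hA : Measurable A) (n : ℕ) : Measurable fun ω => posMax (xvec (fun m => A (θ^[m] ω)) n) := by
  suffices h : ∀ i, Measurable fun ω => xvec (fun m => A (θ^[m] ω)) n i from
    Measurable.iSup fun i => (h i).ereal_toENNReal
  induction n with
  | zero => exact fun _ => measurable_const
  | succ n ih =>
    have hAn : Measurable fun ω => A (θ^[n] ω) := hA.comp (hθ.iterate n)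
    exact fun i => Measurable.iSup fun j => (hAn.eval.eval).add (ih j)

end MaxPlus

section RandomProducts

variable {d : ℕ} {Ω : Type*} [MeasurableSpace Ω] {μ : Measure Ω} {θ : Ω → Ω}
  {A : Ω → Fin d → Fin d → EReal} {a : Ω → ℝ≥0∞} {r : Fin d → Fin d → Prop}

theorem ae_forall_iterate (hθ : MeasurePreserving θ μ μ) {p : Ω → Prop} (hp : ∀ᵐ ω ∂μ, p ω) :
    ∀ᵐ ω ∂μ, ∀ m, p (θ^[m] ω) :=
  ae_all_iff.2 fun m => (hθ.iterate m).quasiMeasurePreserving.ae hp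

theorem lintegral_posMax_xvec_ne_top (hθ : MeasurePreserving θ μ μ) (ha : Measurable a)
    (hai : ∫⁻ ω, a ω ∂μ ≠ ∞) (hAa : ∀ ω i j, A ω i j ≤ (a ω : EReal)) (n : ℕ) :
    ∫⁻ ω, posMax (xvec (fun m => A (θ^[m] ω)) n) ∂μ ≠ ∞ := by
  refine ne_top_of_le_ne_top ?_ (lintegral_mono (posMax_xvec_le_birkhoffSum hAa n))
  rw [lintegral_birkhoffSum hθ ha]
  exact ENNReal.mul_ne_top (ENNReal.natCast_ne_top n) hai

theorem ae_frequently_posMax_xvec_levelConj (hθ : MeasurePreserving θ μ μ)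
    (hAr : ∀ᵐ ω ∂μ, ∀ i j, A ω i j ≠ ⊥ → r i j) (lam : ℕ) {ε e : ℝ≥0∞} (he : e < ε) :
    ∀ᵐ ω ∂μ, (∃ᶠ n : ℕ in atTop, n * ε < posMax (xvec (fun m => A (θ^[m] ω)) n)) →
      ∃ᶠ n : ℕ in atTop,
        n * e < posMax (xvec (fun m => levelConj r lam (A (θ^[m] ω))) n) := by
  filter_upwards [ae_forall_iterate hθ hAr] with ω hω hfreq
  refine (hfreq.and_eventually (eventually_le_natCast_mul (ENNReal.natCast_ne_top (lam * d))
    (tsub_pos_of_lt he).ne')).mono fun n hn => ?_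
  by_contra! hle
  refine hn.1.not_ge ?_
  calc posMax (xvec (fun m => A (θ^[m] ω)) n)
      ≤ posMax (xvec (fun m => levelConj r lam (A (θ^[m] ω))) n) + (lam * d : ℕ) :=
        posMax_xvec_le_levelConj lam hω n
    _ ≤ n * e + n * (ε - e) := add_le_add hle hn.2
    _ = n * ε := by rw [← mul_add, add_tsub_cancel_of_le he.le]

theorem mul_measure_frequently_posMax_xvec_le (hθ : MeasurePreserving θ μ μ) (hA : Measurable A)
    (ha : Measurable a) (hai : ∫⁻ ω, a ω ∂μ ≠ ∞) (hAa : ∀ ω i j, A ω i j ≤ (a ω : EReal))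
    (hAr : ∀ᵐ ω ∂μ, ∀ i j, A ω i j ≠ ⊥ → r i j) {ε b : ℝ≥0∞} (hb : b < ε) (k : ℕ) :
    k * b * μ {ω | ∃ᶠ n : ℕ in atTop, n * ε < posMax (xvec (fun m => A (θ^[m] ω)) n)}
      ≤ ∫⁻ ω, posMax (xvec (fun m => blockDiag r (A (θ^[m] ω))) k) ∂μ := by
  obtain ⟨e, hbe, heε⟩ := exists_between hb
  set P : ℕ → Ω → ℝ≥0∞ := fun n ω => posMax (xvec (fun m => A (θ^[m] ω)) n)
  set G : ℕ → Ω → ℝ≥0∞ := fun n ω => posMax (xvec (fun m => blockDiag r (A (θ^[m] ω))) n)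
  have hG : Measurable (G k) :=
    measurable_posMax_xvec hθ.measurable ((measurable_blockDiag r).comp hA) k
  have hbound : ∀ lam : ℕ, k * b * μ {ω | ∃ᶠ n : ℕ in atTop, n * ε < P n ω}
      ≤ ∫⁻ ω, G k ω ∂μ + ∫⁻ ω, P k ω - lam ∂μ := by
    intro lam
    set Q : ℕ → Ω → ℝ≥0∞ := fun n ω => posMax (xvec (fun m => levelConj r lam (A (θ^[m] ω))) n)
    have hQ : ∀ n, Measurable (Q n) :=
      measurable_posMax_xvec hθ.measurable ((measurable_levelConj r lam).comp hA)
    have hQi : ∀ n, ∫⁻ ω, Q n ω ∂μ ≠ ∞ := lintegral_posMax_xvec_ne_top hθ ha hai fun ω i j =>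
      (levelConj_le r lam (A ω) i j).trans (hAa ω i j)
    calc k * b * μ {ω | ∃ᶠ n : ℕ in atTop, n * ε < P n ω}
        ≤ k * b * μ {ω | ∃ᶠ n : ℕ in atTop, n * e < Q n ω} := by
          gcongr _ * ?_
          exact measure_mono_ae (ae_frequently_posMax_xvec_levelConj hθ hAr lam heε)
      _ ≤ ∫⁻ ω, Q k ω ∂μ :=
          mul_measure_frequently_lt_le hθ hQ hQi
            (posMax_xvec_iterate_add_le θ fun ω => levelConj r lam (A ω)) hbe k
      _ ≤ ∫⁻ ω, G k ω + (P k ω - lam) ∂μ :=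
          lintegral_mono fun ω => posMax_xvec_levelConj_le r lam _ k
      _ = ∫⁻ ω, G k ω ∂μ + ∫⁻ ω, P k ω - lam ∂μ := lintegral_add_left hG _
  have htail := tendsto_lintegral_tsub_natCast (measurable_posMax_xvec hθ.measurable hA k)
    (lintegral_posMax_xvec_ne_top hθ ha hai hAa k)
  simpa only [add_zero] using ge_of_tendsto' (htail.const_add _) hbound

theorem ae_eventually_posMax_xvec_le [IsFiniteMeasure μ] (hθ : MeasurePreserving θ μ μ)
    (hA : Measurable A) (ha : Measurable a) (hai : ∫⁻ ω, a ω ∂μ ≠ ∞)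
    (hAa : ∀ ω i j, A ω i j ≤ (a ω : EReal)) (hAr : ∀ᵐ ω ∂μ, ∀ i j, A ω i j ≠ ⊥ → r i j)
    (hblock : ∀ᵐ ω ∂μ, ∀ᶠ n in atTop,
      posMax (xvec (fun m => blockDiag r (A (θ^[m] ω))) n) = 0) {ε : ℝ≥0∞} (hε : ε ≠ 0) :
    ∀ᵐ ω ∂μ, ∀ᶠ n : ℕ in atTop, posMax (xvec (fun m => A (θ^[m] ω)) n) ≤ n * ε := by
  obtain ⟨b, hb0, hbε⟩ := exists_between (pos_iff_ne_zero.2 hε)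
  set bad : Set Ω := {ω | ∃ᶠ n : ℕ in atTop, n * ε < posMax (xvec (fun m => A (θ^[m] ω)) n)}
  have hsmall : ∀ η : ℝ≥0∞, 0 < η → b * μ bad ≤ η := by
    intro η hη
    obtain ⟨k, hk, hk0⟩ := ((eventually_lintegral_le_natCast_mul hθ ha hai
      (measurable_posMax_xvec hθ.measurable ((measurable_blockDiag r).comp hA))
      (posMax_xvec_le_birkhoffSum fun ω i j => (blockDiag_le r (A ω) i j).trans (hAa ω i j))
      hblock hη.ne').and (eventually_ne_atTop 0)).exists
    refine (ENNReal.mul_le_mul_iff_right (Nat.cast_ne_zero.2 hk0) (ENNReal.natCast_ne_top k)).1 ?_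
    rw [← mul_assoc]
    exact (mul_measure_frequently_posMax_xvec_le hθ hA ha hai hAa hAr hbε k).trans hk
  have hbad : μ bad = 0 :=
    (mul_eq_zero.1 (le_zero_iff.1 (le_of_forall_gt_imp_ge_of_dense hsmall))).resolve_left hb0.ne'
  filter_upwards [measure_eq_zero_iff_ae_notMem.1 hbad] with ω hω
  exact (not_frequently.1 hω).mono fun n hn => not_lt.1 hn

theorem ae_eventually_xvec_le [IsFiniteMeasure μ] (hθ : MeasurePreserving θ μ μ)
    (hA : Measurable A) (ha : Measurable a) (hai : ∫⁻ ω, a ω ∂μ ≠ ∞)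
    (hAa : ∀ ω i j, A ω i j ≤ (a ω : EReal)) (hAr : ∀ᵐ ω ∂μ, ∀ i j, A ω i j ≠ ⊥ → r i j)
    {q₀ q : ℝ} (hq : q₀ < q)
    (hblock : ∀ i, ∀ᵐ ω ∂μ, ∀ᶠ n : ℕ in atTop,
      xvec (fun m => blockDiag r (A (θ^[m] ω))) n i ≤ (n * q₀ : ℝ)) :
    ∀ᵐ ω ∂μ, ∀ᶠ n : ℕ in atTop, ∀ i, xvec (fun m => A (θ^[m] ω)) n i ≤ (n * q : ℝ) := by
  set B : Ω → Fin d → Fin d → EReal := fun ω i j => A ω i j - q₀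
  have hB : Measurable B := measurable_pi_lambda _ fun i => measurable_pi_lambda _ fun j =>
    (hA.eval.eval).sub_const _
  have hBblock : ∀ᵐ ω ∂μ, ∀ᶠ n in atTop,
      posMax (xvec (fun m => blockDiag r (B (θ^[m] ω))) n) = 0 := by
    filter_upwards [ae_all_iff.2 hblock] with ω hω
    filter_upwards [eventually_all.2 hω] with n hn
    refine le_zero_iff.1 (posMax_le_iff.2 fun i => ?_)
    calc xvec (fun m => blockDiag r (B (θ^[m] ω))) n i
        ≤ xvec (fun m => blockDiag r (A (θ^[m] ω))) n i + (n * -q₀ : ℝ) :=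
          xvec_blockDiag_sub_const_le _ q₀ n i
      _ ≤ (n * q₀ : ℝ) + (n * -q₀ : ℝ) := add_le_add_left (hn i) _
      _ = 0 := by rw [← EReal.coe_add, ← mul_add, add_neg_cancel, mul_zero, EReal.coe_zero]
  have hBound : ∀ ω i j, B ω i j ≤ (a ω + ENNReal.ofReal (-q₀) : ℝ≥0∞) := by
    intro ω i j
    rw [EReal.coe_ennreal_add, EReal.coe_ennreal_ofReal]
    exact add_le_add (hAa ω i j) (by exact_mod_cast le_max_left _ _)
  have hBi : ∫⁻ ω, a ω + ENNReal.ofReal (-q₀) ∂μ ≠ ∞ := by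
    rw [lintegral_add_left ha, lintegral_const]
    exact ENNReal.add_ne_top.2 ⟨hai, ENNReal.mul_ne_top ENNReal.ofReal_ne_top (measure_ne_top μ _)⟩
  have hBr : ∀ᵐ ω ∂μ, ∀ i j, B ω i j ≠ ⊥ → r i j := by
    filter_upwards [hAr] with ω hω i j hij
    exact hω i j fun h => hij (by simp [B, h])
  filter_upwards [ae_eventually_posMax_xvec_le hθ hB (ha.add_const _) hBi hBound hBr hBblock
    (ENNReal.ofReal_pos.2 (sub_pos.2 hq)).ne'] with ω hω
  filter_upwards [hω] with n hn i
  calc xvec (fun m => A (θ^[m] ω)) n i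
      ≤ xvec (fun m => B (θ^[m] ω)) n i + (n * q₀ : ℝ) :=
        xvec_le_xvec_sub_const_add _ q₀ n i
    _ ≤ (n * ENNReal.ofReal (q - q₀) : ℝ≥0∞) + (n * q₀ : ℝ) :=
        add_le_add_left (posMax_le_iff.1 hn i) _
    _ = (n * q : ℝ) := by
        rw [EReal.coe_ennreal_mul, ereal_coe_ennreal_natCast, EReal.coe_ennreal_ofReal,
          max_eq_left (sub_pos.2 hq).le, ← EReal.coe_mul, ← EReal.coe_add]
        ring_nf

end RandomProducts

section LyapunovExponent

theorem mpScale_le_iff {n : ℕ} (hn : n ≠ 0) {x : EReal} {q : ℝ} :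
    mpScale n x ≤ q ↔ x ≤ (n * q : ℝ) := by
  have hn' : (0 : ℝ) < n := Nat.cast_pos.2 hn.pos
  unfold mpScale
  induction x using EReal.rec with
  | bot => simp [EReal.coe_mul_bot_of_pos (inv_pos.2 hn')]
  | top => simp [EReal.coe_mul_top_of_pos (inv_pos.2 hn'), EReal.coe_ne_top, -EReal.coe_mul]
  | coe x => rw [← EReal.coe_mul, EReal.coe_le_coe_iff, EReal.coe_le_coe_iff, inv_mul_le_iff₀ hn']

theorem mpScale_mono (n : ℕ) : Monotone (mpScale n) := fun _ _ h =>
  mul_le_mul_of_nonneg_left h (EReal.coe_nonneg.2 (by positivity))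

variable {d : ℕ} {r : Fin d → Fin d → Prop} {γ : Set (Fin d) → EReal} {c T : Set (Fin d)}

theorem gamma_commClass_le_gammaBrack {i : Fin d} (hi : i ∈ Fset r c) :
    γ (commClass r i) ≤ gammaBrack r γ c := by
  obtain ⟨_, ⟨k, rfl⟩, ⟨x, hx, y, hy, hxy⟩, hki⟩ := hi
  exact le_iSup₂_of_le (commClass r i)
    ⟨⟨i, rfl⟩, x, hx, i, self_mem_commClass r i, hxy.trans (hy.2.trans hki.1)⟩ le_rfl

theorem exists_isSCC_eq_gammaBrack (h : gammaBrack r γ c ≠ ⊥) :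
    ∃ c', IsSCC r c' ∧ sccReach r c c' ∧ γ c' = gammaBrack r γ c := by
  have hsup : gammaBrack r γ c = sSup (γ '' {c' | IsSCC r c' ∧ sccReach r c c'}) := sSup_image.symm
  have hne : (γ '' {c' | IsSCC r c' ∧ sccReach r c c'}).Nonempty := by
    by_contra hempty
    exact h (by rw [hsup, Set.not_nonempty_iff_eq_empty.1 hempty, sSup_empty])
  obtain ⟨c', hc', hmax⟩ := hne.csSup_mem (Set.toFinite _)
  exact ⟨c', hc'.1, hc'.2, hmax.trans hsup.symm⟩

theorem subset_Fset {c' : Set (Fin d)} (hc' : IsSCC r c') (hcc' : sccReach r c c') :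
    c' ⊆ Fset r c :=
  fun _ hi => ⟨c', hc', hcc', hi⟩

theorem subset_Hset {c' : Set (Fin d)} (hc' : IsSCC r c') (hcc' : sccReach r c c')
    (hγ : γ c' = gammaBrack r γ c) : c' ⊆ Hset r γ c := by
  obtain ⟨k, rfl⟩ := hc'
  obtain ⟨x, hx, y, hy, hxy⟩ := hcc'
  exact fun i hi => ⟨_, ⟨k, rfl⟩, ⟨x, hx, hxy.trans (hy.2.trans hi.1)⟩, ⟨i, hi, .refl⟩, hγ⟩

theorem Hset_subset_Fset : Hset r γ c ⊆ Fset r c := by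
  rintro i ⟨_, -, ⟨j, hj, hji⟩, -, -⟩
  exact ⟨commClass r i, ⟨i, rfl⟩, ⟨j, hj, i, self_mem_commClass r i, hji⟩, self_mem_commClass r i⟩

variable {Ω : Type*} [MeasurableSpace Ω] {μ : Measure Ω} {θ : Ω → Ω}
  {A : Ω → Fin d → Fin d → EReal} {a : Ω → ℝ≥0∞}

/-- The random matrices `A ∘ θ^[m]`, restricted to the indices in `c`, have maximal Lyapunov
exponent `g`. -/
def HasLyapunovExponent (μ : Measure Ω) (θ : Ω → Ω) (A : Ω → Fin d → Fin d → EReal)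
    (c : Set (Fin d)) (g : EReal) : Prop :=
  ∀ᵐ ω ∂μ, Tendsto
    (fun n => mpScale n (⨆ i, ⨆ (_ : i ∈ c), xvec (fun m => mpRestrict c (A (θ^[m] ω))) n i))
    atTop (𝓝 g)

theorem ae_imp_arcRel : ∀ᵐ ω ∂μ, ∀ i j, A ω i j ≠ ⊥ → arcRel μ A i j := by
  refine ae_all_iff.2 fun i => ae_all_iff.2 fun j => ?_
  by_cases h : μ {ω | A ω i j ≠ ⊥} = 0
  · filter_upwards [measure_eq_zero_iff_ae_notMem.1 h] with ω hω hne using absurd hne hω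
  · exact Eventually.of_forall fun ω _ => h

theorem lintegral_toENNReal_ne_top {X : Ω → EReal} (hX : ∀ ω, X ω ≠ ⊤)
    (hint : Integrable (fun ω => (X ω ⊔ 0).toReal) μ) : ∫⁻ ω, (X ω).toENNReal ∂μ ≠ ∞ := by
  refine ne_top_of_le_ne_top hint.lintegral_lt_top.ne (lintegral_mono fun ω => ?_)
  have hmax : X ω ⊔ 0 ≠ ⊤ := (max_lt (hX ω).lt_top EReal.zero_lt_top).ne
  exact (EReal.toENNReal_le_toENNReal le_sup_left).trans_eq (EReal.toENNReal_of_ne_top hmax)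

theorem HasLyapunovExponent.ae_eventually_xvec_le {g : EReal} (h : HasLyapunovExponent μ θ A c g)
    {q : ℝ} (hq : g < q) {i : Fin d} (hi : i ∈ c) :
    ∀ᵐ ω ∂μ, ∀ᶠ n : ℕ in atTop,
      xvec (fun m => mpRestrict c (A (θ^[m] ω))) n i ≤ (n * q : ℝ) := by
  filter_upwards [h] with ω hω
  filter_upwards [hω.eventually_lt_const hq, eventually_ne_atTop 0] with n hn hn0
  exact (le_iSup₂ (f := fun i (_ : i ∈ c) => xvec (fun m => mpRestrict c (A (θ^[m] ω))) n i)
    i hi).trans ((mpScale_le_iff hn0).1 hn.le)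

theorem HasLyapunovExponent.ae_eventually_lt_mono {g : EReal} (h : HasLyapunovExponent μ θ A c g)
    (hcT : c ⊆ T) : ∀ᵐ ω ∂μ, ∀ x < g, ∀ᶠ n in atTop,
      x < mpScale n (⨆ i, ⨆ (_ : i ∈ T), xvec (fun m => mpRestrict T (A (θ^[m] ω))) n i) := by
  filter_upwards [h] with ω hω x hx
  filter_upwards [hω.eventually_const_lt hx] with n hn
  refine hn.trans_le (mpScale_mono n (iSup₂_le fun i hi => ?_))
  exact le_iSup₂_of_le i (hcT hi) (xvec_mono (fun k => mpRestrict_mono hcT fun _ _ => le_rfl) n i)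

theorem ae_eventually_xvec_mpRestrict_le [IsFiniteMeasure μ] (hθ : MeasurePreserving θ μ μ)
    (hA : Measurable A) (ha : Measurable a) (hai : ∫⁻ ω, a ω ∂μ ≠ ∞)
    (hAa : ∀ ω i j, A ω i j ≤ (a ω : EReal)) (hAr : ∀ᵐ ω ∂μ, ∀ i j, A ω i j ≠ ⊥ → r i j)
    (hγ : ∀ c, IsSCC r c → HasLyapunovExponent μ θ A c (γ c)) (hT : T ⊆ Fset r c) {q : ℝ}
    (hq : gammaBrack r γ c < q) :
    ∀ᵐ ω ∂μ, ∀ᶠ n : ℕ in atTop, ∀ i,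
      xvec (fun m => mpRestrict T (A (θ^[m] ω))) n i ≤ (n * q : ℝ) := by
  obtain ⟨q₀, hq₀, hq₀q⟩ := EReal.lt_iff_exists_real_btwn.1 hq
  have hle : ∀ ω i j, mpRestrict T (A ω) i j ≤ A ω i j := fun ω => mpRestrict_le T (A ω)
  refine ae_eventually_xvec_le (r := r) hθ ((measurable_mpRestrict T).comp hA) ha hai
    (fun ω i j => (hle ω i j).trans (hAa ω i j)) ?_ (EReal.coe_lt_coe_iff.1 hq₀q) fun i => ?_
  · filter_upwards [hAr] with ω hω i j hij
    exact hω i j fun h => hij (le_bot_iff.1 (h ▸ hle ω i j))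
  by_cases hi : i ∈ T
  · filter_upwards [(hγ (commClass r i) ⟨i, rfl⟩).ae_eventually_xvec_le
      ((gamma_commClass_le_gammaBrack (hT hi)).trans_lt hq₀) (self_mem_commClass r i)] with ω hω
    filter_upwards [hω] with n hn
    refine ((xvec_blockDiag_le _ n i).trans ?_).trans hn
    exact xvec_mono (fun k => mpRestrict_mono subset_rfl (hle (θ^[k] ω))) n i
  · refine Eventually.of_forall fun ω => (eventually_ne_atTop 0).mono fun n hn => ?_
    refine (xvec_mono (fun k => blockDiag_le r _) n i).trans ?_
    exact (xvec_mpRestrict_of_notMem _ hi hn).trans_le bot_le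

theorem hasLyapunovExponent_gammaBrack [IsFiniteMeasure μ] (hθ : MeasurePreserving θ μ μ)
    (hA : Measurable A) (ha : Measurable a) (hai : ∫⁻ ω, a ω ∂μ ≠ ∞)
    (hAa : ∀ ω i j, A ω i j ≤ (a ω : EReal)) (hAr : ∀ᵐ ω ∂μ, ∀ i j, A ω i j ≠ ⊥ → r i j)
    (hγ : ∀ c, IsSCC r c → HasLyapunovExponent μ θ A c (γ c)) (hT : T ⊆ Fset r c)
    (hmax : ∀ c', IsSCC r c' → sccReach r c c' → γ c' = gammaBrack r γ c → c' ⊆ T) :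
    HasLyapunovExponent μ θ A T (gammaBrack r γ c) := by
  have hupper : ∀ᵐ ω ∂μ, ∀ q : ℚ, gammaBrack r γ c < (q : ℝ) → ∀ᶠ n : ℕ in atTop, ∀ i,
      xvec (fun m => mpRestrict T (A (θ^[m] ω))) n i ≤ (n * q : ℝ) := by
    refine ae_all_iff.2 fun q => ?_
    by_cases hq : gammaBrack r γ c < (q : ℝ)
    · filter_upwards [ae_eventually_xvec_mpRestrict_le hθ hA ha hai hAa hAr hγ hT hq]
        with ω hω _ using hω
    · exact Eventually.of_forall fun ω h => absurd h hq
  have hlower : ∀ᵐ ω ∂μ, ∀ x < gammaBrack r γ c, ∀ᶠ n in atTop,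
      x < mpScale n (⨆ i, ⨆ (_ : i ∈ T), xvec (fun m => mpRestrict T (A (θ^[m] ω))) n i) := by
    by_cases hbot : gammaBrack r γ c = ⊥
    · exact Eventually.of_forall fun ω x hx => absurd (hbot ▸ hx) not_lt_bot
    · obtain ⟨c', hc', hcc', hγc'⟩ := exists_isSCC_eq_gammaBrack hbot
      exact (hγc' ▸ hγ c' hc').ae_eventually_lt_mono (hmax c' hc' hcc' hγc')
  filter_upwards [hupper, hlower] with ω hωu hωl
  refine tendsto_order.2 ⟨hωl, fun x hx => ?_⟩
  obtain ⟨q, hq, hqx⟩ := EReal.lt_iff_exists_rat_btwn.1 hx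
  filter_upwards [hωu q hq, eventually_ne_atTop 0] with n hn hn0
  exact ((mpScale_le_iff hn0).2 (iSup₂_le fun i _ => hn i)).trans_lt hqx

theorem lyapunov_exponent_of_submatrices_general (μ : Measure Ω) [IsFiniteMeasure μ] (θ : Ω → Ω)
    (hθ : MeasurePreserving θ μ μ) (A : Ω → Fin d → Fin d → EReal) (hA : Measurable A)
    (hnotop : ∀ ω i j, A ω i j ≠ ⊤)
    (hint : Integrable (fun ω => ((⨆ i, ⨆ j, A ω i j) ⊔ 0).toReal) μ)
    (γ : Set (Fin d) → EReal)
    (hγ : ∀ c, IsSCC (arcRel μ A) c → HasLyapunovExponent μ θ A c (γ c)) (c : Set (Fin d)) :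
    HasLyapunovExponent μ θ A (Fset (arcRel μ A) c) (gammaBrack (arcRel μ A) γ c) ∧
      HasLyapunovExponent μ θ A (Hset (arcRel μ A) γ c) (gammaBrack (arcRel μ A) γ c) := by
  set a : Ω → ℝ≥0∞ := fun ω => (⨆ i, ⨆ j, A ω i j).toENNReal
  have ha : Measurable a :=
    (Measurable.iSup fun i => Measurable.iSup fun j => hA.eval.eval).ereal_toENNReal
  have hai : ∫⁻ ω, a ω ∂μ ≠ ∞ :=
    lintegral_toENNReal_ne_top (fun ω => iSup_ne_top fun i => iSup_ne_top (hnotop ω i)) hint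
  have hAa : ∀ ω i j, A ω i j ≤ (a ω : EReal) := fun ω i j =>
    (le_iSup₂ (f := fun i j => A ω i j) i j).trans
      ((le_max_right _ _).trans_eq EReal.coe_toENNReal_eq_max.symm)
  have hmain : ∀ T ⊆ Fset (arcRel μ A) c,
      (∀ c', IsSCC (arcRel μ A) c' → sccReach (arcRel μ A) c c' →
        γ c' = gammaBrack (arcRel μ A) γ c → c' ⊆ T) →
      HasLyapunovExponent μ θ A T (gammaBrack (arcRel μ A) γ c) := fun T =>
    hasLyapunovExponent_gammaBrack hθ hA ha hai hAa ae_imp_arcRel hγ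
  exact ⟨hmain _ subset_rfl fun c' hc' hcc' _ => subset_Fset hc' hcc',
    hmain _ Hset_subset_Fset fun c' => subset_Hset⟩

end LyapunovExponent

/-- **Corollary (Lyapunov exponents of the submatrices `A^{[c]}` and `A^{{c}}`).**
For a stationary ergodic sequence `(A(n))_{n∈ℕ}` with integrable positive part of
`max_{ij} A_{ij}(0)`, for every s.c.c. `c` of `𝒢(A)`,
`γ(A^{{c}}) = γ(A^{[c]}) = γ^{[c]}`: the normalized maxima of the products of the
submatrices indexed by `F_c` and by `H_c` both converge a.s. to `γ^{[c]}`. -/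
theorem lyapunov_exponent_of_submatrices
    {d : ℕ} {Ω : Type*} [MeasurableSpace Ω] (μ : Measure Ω) [IsProbabilityMeasure μ]
    (θ : Ω → Ω) (hθ : Ergodic θ μ)
    (A : Ω → Fin d → Fin d → EReal) (hA : Measurable A)
    (hnotop : ∀ ω i j, A ω i j ≠ ⊤)
    (hint : Integrable (fun ω => ((⨆ i, ⨆ j, A ω i j) ⊔ 0).toReal) μ)
    (γ : Set (Fin d) → EReal)
    (hγ : ∀ c : Set (Fin d), IsSCC (arcRel μ A) c →
      ∀ᵐ ω ∂μ, Tendsto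
        (fun n => mpScale n (⨆ i, ⨆ (_ : i ∈ c), xvec (fun m => mpRestrict c (A (θ^[m] ω))) n i))
        atTop (𝓝 (γ c))) :
    ∀ c : Set (Fin d), IsSCC (arcRel μ A) c →
      (∀ᵐ ω ∂μ, Tendsto
        (fun n => mpScale n (⨆ i, ⨆ (_ : i ∈ Fset (arcRel μ A) c),
          xvec (fun m => mpRestrict (Fset (arcRel μ A) c) (A (θ^[m] ω))) n i))
        atTop (𝓝 (gammaBrack (arcRel μ A) γ c))) ∧
      (∀ᵐ ω ∂μ, Tendsto
        (fun n => mpScale n (⨆ i, ⨆ (_ : i ∈ Hset (arcRel μ A) γ c),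
          xvec (fun m => mpRestrict (Hset (arcRel μ A) γ c) (A (θ^[m] ω))) n i))
        atTop (𝓝 (gammaBrack (arcRel μ A) γ c))) := by
  exact fun c _ =>
    lyapunov_exponent_of_submatrices_general μ θ hθ.toMeasurePreserving A hA hnotop hint γ hγ c
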